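/- For all real numbers a, b, c ≥ 1: (a+b+c)/3 + (abc)^(1/3) − (2/3)·(√(ab) + √(bc) + √(ca)) ≥ (1/36)·((log(a/b))² + (log(b/c))² + (log(c/a))²). -/

import Mathlib

/-!
The gap `f x + f y + f z + 3 f ((x + y + z) / 3) - 2 ∑ f ((x + y) / 2)` in Popoviciu's inequality is
linear in `f`, is nonnegative for convex `f`, and equals `((x - y)² + (y - z)² + (z - x)²) / 6` for
the square function. Hence it is at least `k / 12 * ((x - y)² + (y - z)² + (z - x)²)` when `f` is
strongly convex with modulus `k`. The exponential function is strongly convex with modulus `exp t`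
on `[t, ∞)`; evaluate its gap at the logarithms of `a`, `b` and `c`.
-/

open Set

theorem sameRay_of_mul_nonneg {R : Type*} [CommRing R] [LinearOrder R] [IsStrictOrderedRing R]
    {p q : R} (h : 0 ≤ p * q) : SameRay R p q := by
  rcases eq_or_ne p 0 with rfl | hp
  · exact SameRay.zero_left q
  rcases eq_or_ne q 0 with rfl | hq
  · exact SameRay.zero_right p
  have hpq : (p * q) • p = (p * p) • q := by simp only [smul_eq_mul]; ring
  exact .inr (.inr ⟨p * q, p * p, h.lt_of_ne' (mul_ne_zero hp hq), mul_self_pos.2 hp, hpq⟩)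

section Popoviciu

variable {𝕜 E : Type*} [Field 𝕜] [LinearOrder 𝕜] [IsStrictOrderedRing 𝕜] [AddCommGroup E]
  [Module 𝕜 E]

theorem mean_three_mem_of_convex {s : Set E} (hs : Convex 𝕜 s) {x y z : E} (hx : x ∈ s) (hy : y ∈ s)
    (hz : z ∈ s) : (3⁻¹ : 𝕜) • (x + y + z) ∈ s := by
  have h := hs.add_smul_sub_mem (hs.midpoint_mem hx hy) hz (t := 3⁻¹) ⟨by norm_num, by norm_num⟩
  convert h using 1
  rw [midpoint_eq_smul_add, invOf_eq_inv]
  module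

theorem popoviciu_of_convexOn_of_sameRay {s : Set E} {f : E → 𝕜} (hf : ConvexOn 𝕜 s f)
    {x y z m : E} (hx : x ∈ s) (hy : y ∈ s) (hz : z ∈ s) (hm : m ∈ s)
    (hsum : x + y + z = (3 : 𝕜) • m) (hray : SameRay 𝕜 (m - x) (m - y)) :
    2 * (f (midpoint 𝕜 x y) + f (midpoint 𝕜 y z) + f (midpoint 𝕜 z x)) ≤
      f x + f y + f z + 3 * f m := by
  obtain ⟨α, β, hα, hβ, hαβ, hxα, hyβ⟩ := hray.exists_eq_smul_add
  -- `m - x` and `m - y` add up to `z - m`, so half of either step from `m` stays in `[m, z]`.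
  have hzm : m - x + (m - y) = z - m := by linear_combination (norm := module) -hsum
  rw [hzm] at hxα hyβ
  have map_half_step_le {u : E} {γ : 𝕜} (hγ₀ : 0 ≤ γ) (hγ₁ : γ ≤ 1) (hu : m - u = γ • (z - m)) :
      f (m + (2⁻¹ : 𝕜) • (m - u)) ≤ (1 - γ / 2) * f m + γ / 2 * f z := by
    have hsegment : m + (2⁻¹ : 𝕜) • (m - u) = (1 - γ / 2) • m + (γ / 2) • z := by
      rw [hu]
      module
    rw [hsegment]
    exact hf.2 hm hz (by linarith) (by linarith) (by ring)
  have hxy : f (midpoint 𝕜 x y) ≤ 2⁻¹ * f x + 2⁻¹ * f y := by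
    rw [midpoint_eq_smul_add, invOf_eq_inv, smul_add]
    exact hf.2 hx hy (by norm_num) (by norm_num) (by norm_num)
  have hyz : midpoint 𝕜 y z = m + (2⁻¹ : 𝕜) • (m - x) := by
    rw [midpoint_eq_smul_add, invOf_eq_inv]
    linear_combination (norm := module) (2⁻¹ : 𝕜) • hsum
  have hzx : midpoint 𝕜 z x = m + (2⁻¹ : 𝕜) • (m - y) := by
    rw [midpoint_eq_smul_add, invOf_eq_inv]
    linear_combination (norm := module) (2⁻¹ : 𝕜) • hsum
  have hfyz := map_half_step_le hα (by linarith) hxα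
  have hfzx := map_half_step_le hβ (by linarith) hyβ
  rw [hyz, hzx]
  linear_combination 2 * hxy + 2 * hfyz + 2 * hfzx + (f z - f m) * hαβ

theorem popoviciu_of_convexOn {s : Set 𝕜} {f : 𝕜 → 𝕜} (hf : ConvexOn 𝕜 s f) {x y z : 𝕜}
    (hx : x ∈ s) (hy : y ∈ s) (hz : z ∈ s) :
    2 * (f ((x + y) / 2) + f ((y + z) / 2) + f ((z + x) / 2)) ≤
      f x + f y + f z + 3 * f ((x + y + z) / 3) := by
  have hm : (x + y + z) / 3 ∈ s := by
    simpa only [smul_eq_mul, inv_mul_eq_div] using mean_three_mem_of_convex hf.1 hx hy hz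
  have hsum : x + y + z = (3 : 𝕜) • ((x + y + z) / 3) := (mul_div_cancel₀ _ three_ne_zero).symm
  have hmid (u v : 𝕜) : (u + v) / 2 = midpoint 𝕜 u v := by
    rw [midpoint_eq_smul_add, invOf_eq_inv, smul_eq_mul, inv_mul_eq_div]
  simp only [hmid]
  generalize (x + y + z) / 3 = m at hm hsum ⊢
  rcases mul_nonneg_of_three (m - x) (m - y) (m - z) with h | h | h
  · exact popoviciu_of_convexOn_of_sameRay hf hx hy hz hm hsum (sameRay_of_mul_nonneg h)
  · linarith [popoviciu_of_convexOn_of_sameRay hf hy hz hx hm (by rw [← hsum]; ring)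
      (sameRay_of_mul_nonneg h)]
  · linarith [popoviciu_of_convexOn_of_sameRay hf hz hx hy hm (by rw [← hsum]; ring)
      (sameRay_of_mul_nonneg h)]

end Popoviciu

theorem popoviciu_of_strongConvexOn {s : Set ℝ} {f : ℝ → ℝ} {k : ℝ} (hf : StrongConvexOn s k f)
    {x y z : ℝ} (hx : x ∈ s) (hy : y ∈ s) (hz : z ∈ s) :
    2 * (f ((x + y) / 2) + f ((y + z) / 2) + f ((z + x) / 2)) +
        k / 12 * ((x - y) ^ 2 + (y - z) ^ 2 + (z - x) ^ 2) ≤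
      f x + f y + f z + 3 * f ((x + y + z) / 3) := by
  have h := popoviciu_of_convexOn (strongConvexOn_iff_convex.1 hf) hx hy hz
  simp only [Real.norm_eq_abs, sq_abs] at h
  linear_combination h

theorem strongConvexOn_of_hasDerivWithinAt2_ge {D : Set ℝ} (hD : Convex ℝ D) {f f' f'' : ℝ → ℝ}
    {k : ℝ} (hf : ContinuousOn f D)
    (hf' : ∀ x ∈ interior D, HasDerivWithinAt f (f' x) (interior D) x)
    (hf'' : ∀ x ∈ interior D, HasDerivWithinAt f' (f'' x) (interior D) x)
    (hk : ∀ x ∈ interior D, k ≤ f'' x) : StrongConvexOn D k f := by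
  simp only [strongConvexOn_iff_convex, Real.norm_eq_abs, sq_abs]
  refine convexOn_of_hasDerivWithinAt2_nonneg (f' := fun x ↦ f' x - k * x)
    (f'' := fun x ↦ f'' x - k) hD (by fun_prop) (fun x hx ↦ ?_) (fun x hx ↦ ?_)
    fun x hx ↦ sub_nonneg.2 (hk x hx)
  · exact ((hf' x hx).sub (((hasDerivWithinAt_id x _).pow 2).const_mul (k / 2))).congr_deriv
      (by simp only [id_eq, Nat.cast_ofNat]; ring)
  · exact ((hf'' x hx).sub ((hasDerivWithinAt_id x _).const_mul k)).congr_deriv (by ring)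

theorem strongConvexOn_exp_Ici (t : ℝ) : StrongConvexOn (Ici t) (Real.exp t) Real.exp := by
  refine strongConvexOn_of_hasDerivWithinAt2_ge (convex_Ici t) Real.continuous_exp.continuousOn
    (fun x _ ↦ (Real.hasDerivAt_exp x).hasDerivWithinAt)
    (fun x _ ↦ (Real.hasDerivAt_exp x).hasDerivWithinAt) fun x hx ↦ ?_
  exact Real.exp_le_exp.2 (interior_subset hx)

theorem popoviciu_exp_application_general {a b c t : ℝ} (ht : 0 < t) (ha : t ≤ a) (hb : t ≤ b)
    (hc : t ≤ c) :
    t / 36 * (Real.log (a / b) ^ 2 + Real.log (b / c) ^ 2 + Real.log (c / a) ^ 2) ≤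
      (a + b + c) / 3 + (a * b * c) ^ ((1 : ℝ) / 3) -
        2 / 3 * (√(a * b) + √(b * c) + √(c * a)) := by
  have exists_exp_eq {u : ℝ} (hu : t ≤ u) : ∃ x, Real.log t ≤ x ∧ Real.exp x = u :=
    ⟨Real.log u, Real.log_le_log ht hu, Real.exp_log (ht.trans_le hu)⟩
  obtain ⟨x, hx, rfl⟩ := exists_exp_eq ha
  obtain ⟨y, hy, rfl⟩ := exists_exp_eq hb
  obtain ⟨z, hz, rfl⟩ := exists_exp_eq hc
  have h := popoviciu_of_strongConvexOn (strongConvexOn_exp_Ici (Real.log t)) hx hy hz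
  rw [Real.exp_log ht] at h
  simp only [← Real.exp_add, ← Real.exp_sub, Real.log_exp, ← Real.exp_half, ← Real.exp_mul,
    mul_one_div]
  linear_combination h / 3

/-- For `a, b, c ≥ 1`:
`(a+b+c)/3 + (abc)^(1/3) − (2/3)(√(ab)+√(bc)+√(ca)) ≥ (1/36)(log²(a/b)+log²(b/c)+log²(c/a))`. -/
theorem popoviciu_exp_application (a b c : ℝ) (ha : 1 ≤ a) (hb : 1 ≤ b) (hc : 1 ≤ c) :
    (a + b + c) / 3 + (a * b * c) ^ ((1 : ℝ) / 3) -
        (2 / 3) * (Real.sqrt (a * b) + Real.sqrt (b * c) + Real.sqrt (c * a)) ≥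
      (1 / 36) * ((Real.log (a / b)) ^ 2 + (Real.log (b / c)) ^ 2 + (Real.log (c / a)) ^ 2) :=
  popoviciu_exp_application_general one_pos ha hb hc
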